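/- arXiv:1208.5449 — 2 statements merged into one kernel-verified Lean document; each statement's English description precedes it below -/
import Mathlib

section
/- Let M be a compact metric space, μ a finite Borel measure on M, and B = (ℕ → M) with the product topology. For continuous ψ, β, φ : B → ℝ, one has the first-order Taylor estimate in the supremum norm: ‖L_{ψ+β}φ − L_ψφ − L_ψ(φ·β)‖_∞ ≤ μ(M) · e^{‖ψ‖_∞} · (e^{‖β‖_∞} − 1 − ‖β‖_∞) · ‖φ‖_∞. -/
open MeasureTheory

/-- The sequence `ax = (a, x 0, x 1, …)`. -/
def seqCons {M : Type*} (a : M) (x : ℕ → M) : ℕ → M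
  | 0 => a
  | n + 1 => x n

/-!
Pointwise, `e^(ψ + β) φ - e^ψ φ - e^ψ φ β = e^ψ (e^β - 1 - β) φ`. Comparing power series term by
term gives `|e^t - 1 - t| ≤ e^|t| - 1 - |t|`, and the right-hand side increases with `|t|`, so the
integrand is at most `e^‖ψ‖ (e^‖β‖ - 1 - ‖β‖) ‖φ‖` in absolute value.
-/

open scoped BoundedContinuousFunction

theorem monotoneOn_exp_sub_one_sub_id :
    MonotoneOn (fun t : ℝ ↦ Real.exp t - 1 - t) (Set.Ici 0) := by
  intro s hs t _ hst
  have h_exp : Real.exp s + (t - s) ≤ Real.exp t :=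
    calc
      Real.exp s + (t - s) ≤ Real.exp s + Real.exp s * (t - s) := by
        gcongr
        exact le_mul_of_one_le_left (sub_nonneg.2 hst) (Real.one_le_exp hs)
      _ = Real.exp s * (t - s + 1) := by ring
      _ ≤ Real.exp s * Real.exp (t - s) := by
        gcongr
        exact Real.add_one_le_exp _
      _ = Real.exp t := by rw [← Real.exp_add, add_sub_cancel]
  dsimp only
  linarith

theorem abs_exp_sub_sum_le_exp_abs_sub_sum (t : ℝ) (n : ℕ) :
    |Real.exp t - ∑ m ∈ Finset.range n, t ^ m / m.factorial| ≤
      Real.exp |t| - ∑ m ∈ Finset.range n, |t| ^ m / m.factorial := by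
  have h_complex := Complex.norm_exp_sub_sum_le_exp_norm_sub_sum t n
  rw [Complex.norm_real, Real.norm_eq_abs] at h_complex
  rw [← Real.norm_eq_abs (Real.exp t - _), ← Complex.norm_real]
  exact_mod_cast h_complex

theorem abs_exp_sub_one_sub_id_le_exp_abs (t : ℝ) :
    |Real.exp t - 1 - t| ≤ Real.exp |t| - 1 - |t| := by
  simpa [Finset.sum_range_succ, sub_sub] using abs_exp_sub_sum_le_exp_abs_sub_sum t 2

theorem abs_exp_sub_one_sub_id_le_of_abs_le {t b : ℝ} (h : |t| ≤ b) :
    |Real.exp t - 1 - t| ≤ Real.exp b - 1 - b :=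
  (abs_exp_sub_one_sub_id_le_exp_abs t).trans <|
    monotoneOn_exp_sub_one_sub_id (abs_nonneg t) ((abs_nonneg t).trans h) h

theorem abs_exp_add_mul_sub_sub_le {s t u a b c : ℝ} (hs : s ≤ a) (ht : |t| ≤ b) (hu : |u| ≤ c) :
    |Real.exp (s + t) * u - Real.exp s * u - Real.exp s * (u * t)| ≤
      Real.exp a * (Real.exp b - 1 - b) * c := by
  have h_rem := abs_exp_sub_one_sub_id_le_of_abs_le ht
  have h_rem_nonneg : 0 ≤ Real.exp b - 1 - b := (abs_nonneg _).trans h_rem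
  calc
    _ = |Real.exp s * (Real.exp t - 1 - t) * u| := by
      rw [Real.exp_add]
      ring_nf
    _ = Real.exp s * |Real.exp t - 1 - t| * |u| := by rw [abs_mul, abs_mul, Real.abs_exp]
    _ ≤ Real.exp a * (Real.exp b - 1 - b) * c := by gcongr

section Integral

variable {X : Type*} [MeasurableSpace X] {μ : Measure X} {f g h : X → ℝ} {A B C : ℝ}

theorem integrable_exp_mul_of_le (hf : AEStronglyMeasurable f μ) (hh : Integrable h μ)
    (hfA : ∀ᵐ x ∂μ, f x ≤ A) : Integrable (fun x ↦ Real.exp (f x) * h x) μ :=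
  hh.bdd_mul (c := Real.exp A) (Real.continuous_exp.comp_aestronglyMeasurable hf) <| by
    filter_upwards [hfA] with x hx
    rwa [Real.norm_eq_abs, Real.abs_exp, Real.exp_le_exp]

theorem abs_integral_exp_add_mul_sub_sub_le [IsFiniteMeasure μ]
    (hf : AEStronglyMeasurable f μ) (hg : AEStronglyMeasurable g μ) (hh : AEStronglyMeasurable h μ)
    (hfA : ∀ᵐ x ∂μ, f x ≤ A) (hgB : ∀ᵐ x ∂μ, |g x| ≤ B) (hhC : ∀ᵐ x ∂μ, |h x| ≤ C) :
    |(∫ x, Real.exp (f x + g x) * h x ∂μ) - (∫ x, Real.exp (f x) * h x ∂μ) -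
        ∫ x, Real.exp (f x) * (h x * g x) ∂μ| ≤
      μ.real Set.univ * Real.exp A * (Real.exp B - 1 - B) * C := by
  have h_int : Integrable h μ := .of_bound hh C hhC
  have h_perturbed : Integrable (fun x ↦ Real.exp (f x + g x) * h x) μ := by
    refine integrable_exp_mul_of_le (A := A + B) (hf.add hg) h_int ?_
    filter_upwards [hfA, hgB] with x hfx hgx using add_le_add hfx (le_of_abs_le hgx)
  have h_zeroth : Integrable (fun x ↦ Real.exp (f x) * h x) μ :=
    integrable_exp_mul_of_le hf h_int hfA
  have h_first : Integrable (fun x ↦ Real.exp (f x) * (h x * g x)) μ :=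
    integrable_exp_mul_of_le hf (h_int.mul_bdd hg hgB) hfA
  have h_bound : ∀ᵐ x ∂μ, ‖Real.exp (f x + g x) * h x - Real.exp (f x) * h x -
      Real.exp (f x) * (h x * g x)‖ ≤ Real.exp A * (Real.exp B - 1 - B) * C := by
    filter_upwards [hfA, hgB, hhC] with x hfx hgx hhx using abs_exp_add_mul_sub_sub_le hfx hgx hhx
  rw [← integral_sub h_perturbed h_zeroth, ← integral_sub (h_perturbed.sub' h_zeroth) h_first]
  exact (norm_integral_le_of_norm_le_const h_bound).trans_eq (by ring)

end Integral

section Ruelle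

variable {M : Type*}

/-- The Ruelle operator `L_ψ φ (x) = ∫ e^(ψ (ax)) φ (ax) dμ(a)`, taken on arbitrary functions: the
value is the junk value `0` where the integrand is not integrable. -/
noncomputable def ruelleOperator [MeasurableSpace M] (μ : Measure M) (ψ φ : (ℕ → M) → ℝ)
    (x : ℕ → M) : ℝ :=
  ∫ a, Real.exp (ψ (seqCons a x)) * φ (seqCons a x) ∂μ

variable [TopologicalSpace M]

theorem continuous_seqCons_left (x : ℕ → M) : Continuous fun a ↦ seqCons a x :=
  continuous_pi fun
    | 0 => continuous_id
    | _ + 1 => continuous_const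

theorem ruelle_operator_first_order_taylor_general [MeasurableSpace M] [OpensMeasurableSpace M]
    (μ : Measure M) [IsFiniteMeasure μ] (ψ β φ : (ℕ → M) →ᵇ ℝ) (x : ℕ → M) :
    |ruelleOperator μ (ψ + β) φ x - ruelleOperator μ ψ φ x - ruelleOperator μ ψ (φ * β) x| ≤
      μ.real Set.univ * Real.exp ‖ψ‖ * (Real.exp ‖β‖ - 1 - ‖β‖) * ‖φ‖ := by
  have h_meas (f : (ℕ → M) →ᵇ ℝ) : AEStronglyMeasurable (fun a ↦ f (seqCons a x)) μ :=
    (f.continuous.comp (continuous_seqCons_left x)).aestronglyMeasurable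
  have h_bound (f : (ℕ → M) →ᵇ ℝ) : ∀ᵐ a ∂μ, |f (seqCons a x)| ≤ ‖f‖ :=
    .of_forall fun a ↦ f.norm_coe_le_norm (seqCons a x)
  exact abs_integral_exp_add_mul_sub_sub_le (h_meas ψ) (h_meas β) (h_meas φ)
    ((h_bound ψ).mono fun _ ↦ le_of_abs_le) (h_bound β) (h_bound φ)

end Ruelle

/-- First-order Taylor estimate for the Ruelle operator in the sup norm:
`‖L_{ψ+β}φ − L_ψφ − L_ψ(φ·β)‖_∞ ≤ μ(M) e^{‖ψ‖_∞} (e^{‖β‖_∞} − 1 − ‖β‖_∞) ‖φ‖_∞`. -/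
theorem ruelle_operator_first_order_taylor
    {M : Type*} [MetricSpace M] [CompactSpace M] [MeasurableSpace M] [BorelSpace M]
    (μ : Measure M) [IsFiniteMeasure μ]
    (ψ β φ : C(ℕ → M, ℝ)) :
    ∀ x : ℕ → M,
      |(∫ a, Real.exp (ψ (seqCons a x) + β (seqCons a x)) * φ (seqCons a x) ∂μ) -
        (∫ a, Real.exp (ψ (seqCons a x)) * φ (seqCons a x) ∂μ) -
        (∫ a, Real.exp (ψ (seqCons a x)) * φ (seqCons a x) * β (seqCons a x) ∂μ)| ≤
      (μ Set.univ).toReal * Real.exp ‖ψ‖ * (Real.exp ‖β‖ - 1 - ‖β‖) * ‖φ‖ := by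
  intro x
  simpa [ruelleOperator, measureReal_def, mul_assoc] using
    ruelle_operator_first_order_taylor_general μ (.mkOfCompact ψ) (.mkOfCompact β)
      (.mkOfCompact φ) x
end

section
/- Let M be a compact metric space, μ a finite Borel measure on M, B = (ℕ → M) with the product topology, and C(B,ℝ) the Banach space of continuous real-valued functions on B with the supremum norm. Let Θ : C(B,ℝ) → (C(B,ℝ) →L C(B,ℝ)) satisfy (Θ(ψ)φ)(x) = ∫_M e^{ψ(ax)} φ(ax) dμ(a). Then for all ψ, β ∈ C(B,ℝ), the series ∑_{n=1}^∞ (1/n!)·[φ ↦ Θ(ψ)(φ·βⁿ)] converges absolutely in the operator norm on C(B,ℝ), its sum equals Θ(ψ+β) − Θ(ψ), and the operator norm of the sum is at most ‖Θ(ψ)‖_op · (e^{‖β‖_∞} − 1). -/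
open MeasureTheory

/-!
The Ruelle operators satisfy the cocycle identity `Θ (ψ + β) φ = Θ ψ (φ * exp β)`, where the
exponential is taken in the Banach algebra `C(B, ℝ)`. Since `g ↦ (φ ↦ Θ ψ (φ * g))` is a bounded
linear map of norm at most `‖Θ ψ‖`, it carries the norm-convergent series of `exp β - 1` to the
series of `Θ (ψ + β) - Θ ψ`.
-/

open NormedSpace (exp)

section ExponentialTail

variable (𝕜 : Type*) [RCLike 𝕜] {A : Type*} [NormedRing A]

theorem summable_norm_inv_factorial_smul_pow_succ [NormedAlgebra 𝕜 A] (b : A) :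
    Summable fun n : ℕ => ‖((n + 1).factorial : 𝕜)⁻¹ • b ^ (n + 1)‖ :=
  (summable_nat_add_iff 1).mpr (NormedSpace.norm_expSeries_summable' (𝕂 := 𝕜) b)

theorem hasSum_inv_factorial_smul_pow_succ [NormedAlgebra 𝕜 A] [CompleteSpace A] (b : A) :
    HasSum (fun n : ℕ => ((n + 1).factorial : 𝕜)⁻¹ • b ^ (n + 1)) (exp b - 1) := by
  simpa using (hasSum_nat_add_iff' 1).mpr (NormedSpace.exp_series_hasSum_exp' (𝕂 := 𝕜) b)

theorem norm_exp_sub_one_le [NormedAlgebra 𝕜 A] [CompleteSpace A] (b : A) :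
    ‖exp b - 1‖ ≤ Real.exp ‖b‖ - 1 := by
  have hsum := hasSum_inv_factorial_smul_pow_succ 𝕜 b
  have hbound := hasSum_inv_factorial_smul_pow_succ ℝ ‖b‖
  rw [← Real.exp_eq_exp_ℝ] at hbound
  refine hsum.norm_le_of_bounded hbound fun n => ?_
  rw [norm_smul, norm_inv, RCLike.norm_natCast, smul_eq_mul]
  gcongr
  exact norm_pow_le' b n.succ_pos

end ExponentialTail

section WeightedOperator

variable {𝕜 A F : Type*} [RCLike 𝕜] [NormedAddCommGroup F] [NormedSpace 𝕜 F]

section NonUnital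

variable [NonUnitalNormedRing A] [NormedSpace 𝕜 A] [IsScalarTower 𝕜 A A] [SMulCommClass 𝕜 A A]

/-- The operator `φ ↦ L (φ * g)` obtained from `L` by inserting a weight `g`, bundled as a bounded
linear map in `g`. -/
noncomputable def weightedOperator (L : A →L[𝕜] F) : A →L[𝕜] A →L[𝕜] F :=
  (ContinuousLinearMap.compL 𝕜 A A F L).comp (ContinuousLinearMap.mul 𝕜 A).flip

theorem norm_weightedOperator_apply_le (L : A →L[𝕜] F) (g : A) :
    ‖weightedOperator L g‖ ≤ ‖L‖ * ‖g‖ :=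
  calc ‖weightedOperator L g‖ ≤ ‖L‖ * ‖(ContinuousLinearMap.mul 𝕜 A).flip g‖ :=
        L.opNorm_comp_le _
    _ ≤ ‖L‖ * ‖g‖ := by
        gcongr
        refine ContinuousLinearMap.opNorm_le_bound _ (norm_nonneg g) fun φ => ?_
        exact (norm_mul_le φ g).trans_eq (mul_comm _ _)

end NonUnital

variable [NormedRing A] [NormedAlgebra 𝕜 A]

theorem weightedOperator_one (L : A →L[𝕜] F) : weightedOperator L 1 = L :=
  ContinuousLinearMap.ext fun φ => congrArg L (mul_one φ)

theorem weightedOperator_sub_one (L : A →L[𝕜] F) (g : A) :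
    weightedOperator L (g - 1) = weightedOperator L g - L := by
  rw [map_sub, weightedOperator_one]

theorem summable_norm_weightedOperator_pow_succ (L : A →L[𝕜] F) (b : A) :
    Summable fun n : ℕ =>
      ‖((n + 1).factorial : 𝕜)⁻¹ • weightedOperator L (b ^ (n + 1))‖ := by
  simp only [← map_smul]
  exact .of_nonneg_of_le (fun _ => norm_nonneg _) (fun _ => norm_weightedOperator_apply_le L _)
    ((summable_norm_inv_factorial_smul_pow_succ 𝕜 b).mul_left ‖L‖)

variable [CompleteSpace A]

theorem hasSum_weightedOperator_pow_succ (L : A →L[𝕜] F) (b : A) :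
    HasSum (fun n : ℕ => ((n + 1).factorial : 𝕜)⁻¹ • weightedOperator L (b ^ (n + 1)))
      (weightedOperator L (exp b) - L) := by
  simpa only [map_smul, weightedOperator_sub_one] using
    (hasSum_inv_factorial_smul_pow_succ 𝕜 b).mapL (weightedOperator L)

theorem norm_weightedOperator_exp_sub_le (L : A →L[𝕜] F) (b : A) :
    ‖weightedOperator L (exp b) - L‖ ≤ ‖L‖ * (Real.exp ‖b‖ - 1) := by
  rw [← weightedOperator_sub_one]
  exact (norm_weightedOperator_apply_le L _).trans (by gcongr; exact norm_exp_sub_one_le 𝕜 b)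

theorem ruelle_operator_series_convergence_general (L : A →L[𝕜] F) (b : A) :
    (Summable fun n : ℕ =>
      ‖((n + 1).factorial : 𝕜)⁻¹ • weightedOperator L (b ^ (n + 1))‖) ∧
    HasSum (fun n : ℕ => ((n + 1).factorial : 𝕜)⁻¹ • weightedOperator L (b ^ (n + 1)))
      (weightedOperator L (exp b) - L) ∧
    ‖weightedOperator L (exp b) - L‖ ≤ ‖L‖ * (Real.exp ‖b‖ - 1) :=
  ⟨summable_norm_weightedOperator_pow_succ L b, hasSum_weightedOperator_pow_succ L b,
    norm_weightedOperator_exp_sub_le L b⟩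

end WeightedOperator

section TransferOperator

variable {X : Type*} [TopologicalSpace X] [CompactSpace X]

theorem exp_continuousMap_apply {R : Type*} [NormedRing R] [NormedAlgebra ℚ R] [CompleteSpace R]
    (f : C(X, R)) (x : X) : exp f x = exp (f x) :=
  NormedSpace.map_exp ((Pi.evalRingHom _ x).comp ContinuousMap.coeFnRingHom)
    (continuous_eval_const x) f

theorem transferOperator_add {Y M : Type*} [TopologicalSpace Y] [CompactSpace Y]
    [MeasurableSpace M] (μ : Measure M) (s : M → Y → X) (Θ : C(X, ℝ) → C(X, ℝ) →L[ℝ] C(Y, ℝ))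
    (hΘ : ∀ ψ φ : C(X, ℝ), ∀ y : Y, Θ ψ φ y = ∫ a, Real.exp (ψ (s a y)) * φ (s a y) ∂μ)
    (ψ β : C(X, ℝ)) : Θ (ψ + β) = weightedOperator (Θ ψ) (exp β) := by
  ext φ y
  calc Θ (ψ + β) φ y = ∫ a, Real.exp (ψ (s a y) + β (s a y)) * φ (s a y) ∂μ := hΘ _ _ _
    _ = ∫ a, Real.exp (ψ (s a y)) * (φ * exp β) (s a y) ∂μ := by
        congr with a
        rw [ContinuousMap.mul_apply, exp_continuousMap_apply, ← Real.exp_eq_exp_ℝ, Real.exp_add]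
        ring
    _ = weightedOperator (Θ ψ) (exp β) φ y := (hΘ _ _ _).symm

end TransferOperator

/-- For the map `Θ : ψ ↦ L_ψ` and all `ψ, β ∈ C(B,ℝ)`, the series
`∑_{n=1}^∞ (1/n!)·[φ ↦ Θ(ψ)(φ·βⁿ)]` converges absolutely in the operator norm, its sum
equals `Θ(ψ+β) − Θ(ψ)`, and the operator norm of the sum is at most
`‖Θ(ψ)‖_op · (e^{‖β‖_∞} − 1)`. -/
theorem ruelle_operator_series_convergence
    {M : Type*} [MetricSpace M] [CompactSpace M] [MeasurableSpace M] [BorelSpace M]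
    (μ : Measure M) [IsFiniteMeasure μ]
    (Θ : C(ℕ → M, ℝ) → C(ℕ → M, ℝ) →L[ℝ] C(ℕ → M, ℝ))
    (hΘ : ∀ ψ φ : C(ℕ → M, ℝ), ∀ x : ℕ → M,
      Θ ψ φ x = ∫ a, Real.exp (ψ (seqCons a x)) * φ (seqCons a x) ∂μ)
    (ψ β : C(ℕ → M, ℝ)) :
    (Summable fun n : ℕ => ‖((n + 1).factorial : ℝ)⁻¹ •
        ((Θ ψ).comp ((ContinuousLinearMap.mul ℝ (C(ℕ → M, ℝ))).flip (β ^ (n + 1))))‖) ∧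
    HasSum (fun n : ℕ => ((n + 1).factorial : ℝ)⁻¹ •
        ((Θ ψ).comp ((ContinuousLinearMap.mul ℝ (C(ℕ → M, ℝ))).flip (β ^ (n + 1)))))
      (Θ (ψ + β) - Θ ψ) ∧
    ‖Θ (ψ + β) - Θ ψ‖ ≤ ‖Θ ψ‖ * (Real.exp ‖β‖ - 1) := by
  rw [transferOperator_add μ seqCons Θ hΘ ψ β]
  exact ruelle_operator_series_convergence_general (Θ ψ) β
end
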